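/- Let I and J be ideals of R and let e ≥ 0. Then (m^{[e]} : J) ⊆ (m^{[e]} : I) if and only if I + m^{[e]} ⊆ J + m^{[e]}. -/

import Mathlib

/-!
Since Frobenius is additive, `m^{[e]}` is generated by the `q`-th powers of the variables, where
`q = p ^ e`. So `f ∈ m^{[e]}` exactly when no monomial dividing `X ^ D`, `D = (q - 1, …, q - 1)`,
occurs in `f`. On `R / m^{[e]}` the pairing `(f, g) ↦ coeff D (f * g)` is perfect: the monomial
`X ^ s` is dual to `X ^ (D - s)`. Perfectness yields the double annihilator formula
`(m^{[e]} : (m^{[e]} : J)) = J + m^{[e]}`, so colon into `m^{[e]}` is an order-reversing involution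
on the ideals containing `m^{[e]}`.
-/

open MvPolynomial

noncomputable section

/-- `I^{[e]}`-style bracket power: the ideal generated by `q`-th powers of elements of `I`. -/
def bracketPow {A : Type*} [CommRing A] (I : Ideal A) (q : ℕ) : Ideal A :=
  Ideal.span ((fun u => u ^ q) '' (I : Set A))

/-- The test ideal `τ(f^{1 - 1/p^e})`: the smallest ideal `a` with `f^{p^e - 1} ∈ a^{[e]}`. -/
def testIdeal {A : Type*} [CommRing A] (p : ℕ) (f : A) (e : ℕ) : Ideal A :=
  sInf {a : Ideal A | f ^ (p ^ e - 1) ∈ bracketPow a (p ^ e)}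

/-- The homogeneous maximal ideal `m = (x_0, ..., x_n)`. -/
def mxI (k : Type*) [Field k] (n : ℕ) : Ideal (MvPolynomial (Fin (n + 1)) k) :=
  Ideal.span (Set.range (X : Fin (n + 1) → MvPolynomial (Fin (n + 1)) k))

/-- The set of degrees of homogeneous elements of `(m^{[e]} : τ) \ m^{[e]}`. -/
def MeSet (k : Type*) [Field k] (n p : ℕ) (τ : Ideal (MvPolynomial (Fin (n + 1)) k))
    (e : ℕ) : Set ℕ :=
  {d : ℕ | ∃ g : MvPolynomial (Fin (n + 1)) k,
    g ∈ (bracketPow (mxI k n) (p ^ e)).colon τ ∧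
    g ∉ bracketPow (mxI k n) (p ^ e) ∧ g.IsHomogeneous d}

/-- `M_e`: the minimal degree of a homogeneous element of `(m^{[e]} : τ) \ m^{[e]}`. -/
def Me (k : Type*) [Field k] (n p : ℕ) (τ : Ideal (MvPolynomial (Fin (n + 1)) k))
    (e : ℕ) : ℕ :=
  sInf (MeSet k n p τ e)

/-- `e_0`: the least `e` with `τ ⊄ m^{[e]}`. -/
def e0 (k : Type*) [Field k] (n p : ℕ) (τ : Ideal (MvPolynomial (Fin (n + 1)) k)) : ℕ :=
  sInf {e : ℕ | ¬ τ ≤ bracketPow (mxI k n) (p ^ e)}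

section Colon

variable {A : Type*} [CommSemiring A] (Q J : Ideal A)

lemma le_colon_colon : J ≤ Q.colon (Q.colon J) := fun x hx =>
  Submodule.mem_colon.mpr fun g hg => by
    rw [smul_eq_mul, mul_comm]
    exact Submodule.mem_colon.mp hg x hx

lemma colon_sup_self : Q.colon (J ⊔ Q : Ideal A) = Q.colon J := by
  have colon_self : Q.colon (Q : Set A) = ⊤ := (Submodule.colon_eq_top_iff_subset _).mpr le_rfl
  have sup_eq_span : J ⊔ Q = Ideal.span (J ∪ Q : Set A) := by
    rw [Ideal.span_union, Ideal.span_eq, Ideal.span_eq]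
  rw [sup_eq_span, Ideal.colon_span, Submodule.colon_union, colon_self, inf_top_eq]

end Colon

section BracketPow

variable {A : Type*} [CommRing A] (p : ℕ) [ExpChar A p]

lemma bracketPow_eq_map_iterateFrobenius (I : Ideal A) (e : ℕ) :
    bracketPow I (p ^ e) = I.map (iterateFrobenius A p e) :=
  rfl

lemma bracketPow_span (s : Set A) (e : ℕ) :
    bracketPow (Ideal.span s) (p ^ e) = Ideal.span ((· ^ p ^ e) '' s) := by
  rw [bracketPow_eq_map_iterateFrobenius, Ideal.map_span]
  rfl

end BracketPow

section BoxIdeal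

variable {σ R : Type*} [CommSemiring R]

variable (R) in
/-- The monomial complete intersection ideal `(X i ^ (D i + 1))ᵢ`. The exponents are shifted by one
so that `D` is the exponent of the monomial spanning the socle of the quotient. -/
def boxIdeal (D : σ →₀ ℕ) : Ideal (MvPolynomial σ R) :=
  Ideal.span (Set.range fun i => X i ^ (D i + 1))

lemma mem_boxIdeal_iff {D : σ →₀ ℕ} {f : MvPolynomial σ R} :
    f ∈ boxIdeal R D ↔ ∀ s ≤ D, coeff s f = 0 := by
  have span_eq : boxIdeal R D = Ideal.span ((fun s => monomial s (1 : R)) ''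
      Set.range fun i => Finsupp.single i (D i + 1)) := by
    simp only [boxIdeal, X_pow_eq_monomial, ← Set.range_comp, Function.comp_def]
  have not_le_iff (s : σ →₀ ℕ) : ¬ s ≤ D ↔ ∃ i, D i + 1 ≤ s i := by
    simp only [Finsupp.le_def, not_forall, not_le, Nat.succ_le_iff]
  simp only [span_eq, mem_ideal_span_monomial_image, Set.exists_range_iff, Finsupp.single_le_iff,
    ← not_le_iff, mem_support_iff, not_imp_not]

lemma mem_boxIdeal_iff_coeff_mul {D : σ →₀ ℕ} {f : MvPolynomial σ R} :
    f ∈ boxIdeal R D ↔ ∀ g, coeff D (f * g) = 0 := by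
  refine ⟨fun hf g => mem_boxIdeal_iff.mp (Ideal.mul_mem_right g _ hf) D le_rfl,
    fun h => mem_boxIdeal_iff.mpr fun s hs => ?_⟩
  simpa only [coeff_mul_monomial', tsub_le_self, if_true, tsub_tsub_cancel_of_le hs, mul_one]
    using h (monomial (D - s) 1)

lemma monomial_mem_boxIdeal_of_not_le {D s : σ →₀ ℕ} (hs : ¬ s ≤ D) (c : R) :
    monomial s c ∈ boxIdeal R D := by
  classical
  refine mem_boxIdeal_iff.mpr fun t ht => ?_
  rw [coeff_monomial, if_neg]
  rintro rfl
  exact hs ht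

lemma coeff_sum_monomial_tsub [DecidableEq σ] {D s : σ →₀ ℕ} (hs : s ≤ D) (a : (σ →₀ ℕ) → R) :
    coeff (D - s) (∑ t ∈ Finset.Iic D, monomial (D - t) (a t)) = a s := by
  rw [coeff_sum, Finset.sum_eq_single_of_mem s (Finset.mem_Iic.mpr hs), coeff_monomial, if_pos rfl]
  intro t ht hts
  rw [coeff_monomial, if_neg]
  rwa [tsub_right_inj (Finset.mem_Iic.mp ht) hs]

lemma exists_coeff_mul_eq_of_boxIdeal_le_ker {D : σ →₀ ℕ} {l : MvPolynomial σ R →ₗ[R] R}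
    (hl : (boxIdeal R D).restrictScalars R ≤ LinearMap.ker l) :
    ∃ g, ∀ f, coeff D (g * f) = l f := by
  classical
  let g := ∑ s ∈ Finset.Iic D, monomial (D - s) (l (monomial s 1))
  suffices h : lcoeff R D ∘ₗ LinearMap.mulLeft R g = l from ⟨g, LinearMap.congr_fun h⟩
  ext s
  change coeff D (g * monomial s 1) = l (monomial s 1)
  rw [coeff_mul_monomial', mul_one]
  split_ifs with hs
  · exact coeff_sum_monomial_tsub hs _
  · exact (hl (monomial_mem_boxIdeal_of_not_le hs 1)).symm

end BoxIdeal

section DoubleAnnihilator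

variable {σ k : Type*} [Field k]

lemma colon_colon_boxIdeal (D : σ →₀ ℕ) (J : Ideal (MvPolynomial σ k)) :
    (boxIdeal k D).colon ((boxIdeal k D).colon J) = J ⊔ boxIdeal k D := by
  refine le_antisymm (fun x hx => ?_) (sup_le (le_colon_colon _ _) Ideal.le_colon)
  by_contra hxJ
  obtain ⟨l, hlx, hl⟩ := Submodule.exists_le_ker_of_notMem
    (p := (J ⊔ boxIdeal k D).restrictScalars k) hxJ
  obtain ⟨g, hg⟩ := exists_coeff_mul_eq_of_boxIdeal_le_ker
    fun f (hf : f ∈ boxIdeal k D) => hl (Ideal.mem_sup_right hf)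
  have hgJ : g ∈ (boxIdeal k D).colon J := Submodule.mem_colon.mpr fun y hy =>
    mem_boxIdeal_iff_coeff_mul.mpr fun r => by
      rw [smul_eq_mul, mul_assoc, hg]
      exact hl (Ideal.mem_sup_left (J.mul_mem_right r hy))
  have hxg : x * g ∈ boxIdeal k D := Submodule.mem_colon.mp hx g hgJ
  apply hlx
  rw [← hg, mul_comm]
  exact mem_boxIdeal_iff.mp hxg D le_rfl

theorem colon_le_colon_iff_general (D : σ →₀ ℕ) (I J : Ideal (MvPolynomial σ k)) :
    (boxIdeal k D).colon J ≤ (boxIdeal k D).colon I ↔ I ⊔ boxIdeal k D ≤ J ⊔ boxIdeal k D := by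
  refine ⟨fun h => ?_, fun h => ?_⟩
  · rw [← colon_colon_boxIdeal D I, ← colon_colon_boxIdeal D J]
    exact Submodule.colon_mono le_rfl h
  · calc (boxIdeal k D).colon J
        = (boxIdeal k D).colon (J ⊔ boxIdeal k D : Ideal _) := (colon_sup_self _ _).symm
      _ ≤ (boxIdeal k D).colon (I ⊔ boxIdeal k D : Ideal _) := Submodule.colon_mono le_rfl h
      _ = (boxIdeal k D).colon I := colon_sup_self _ _

end DoubleAnnihilator

lemma bracketPow_mxI_eq_boxIdeal (k : Type*) [Field k] (n p : ℕ) [ExpChar k p] (e : ℕ) :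
    bracketPow (mxI k n) (p ^ e) =
      boxIdeal k (Finsupp.equivFunOnFinite.symm fun _ => p ^ e - 1) := by
  have hq : p ^ e - 1 + 1 = p ^ e := Nat.sub_add_cancel (expChar_pow_pos k p e)
  rw [mxI, bracketPow_span, boxIdeal, ← Set.range_comp]
  simp only [Function.comp_def, Finsupp.equivFunOnFinite_symm_apply_apply, hq]

/-- For ideals `I`, `J` of `R` and `e ≥ 0`,
`(m^{[e]} : J) ⊆ (m^{[e]} : I)` iff `I + m^{[e]} ⊆ J + m^{[e]}`. -/
theorem colon_le_colon_iff {k : Type*} [Field k] {p n : ℕ} [Fact p.Prime] [CharP k p]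
    (I J : Ideal (MvPolynomial (Fin (n + 1)) k)) (e : ℕ) :
    (bracketPow (mxI k n) (p ^ e)).colon J ≤ (bracketPow (mxI k n) (p ^ e)).colon I ↔
      I ⊔ bracketPow (mxI k n) (p ^ e) ≤ J ⊔ bracketPow (mxI k n) (p ^ e) := by
  rw [bracketPow_mxI_eq_boxIdeal]
  exact colon_le_colon_iff_general _ I J

end
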